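/- Let 𝒯' be a finite nonempty set of trades such that every pair of trades from 𝒯' is compatible. Let p⁺ be the minimum element of {q ∈ {w(T), ℓ(T)} : T ∈ 𝒯', q > 0} and let p⁻ be the maximum element of {q ∈ {w(T), ℓ(T)} : T ∈ 𝒯', q < 0} (both sets are nonempty since every trade has one closing price above 0 and one below 0). Then either every trade T ∈ 𝒯' with p⁺ ∈ {w(T), ℓ(T)} satisfies w(T) = p⁺, or every trade T ∈ 𝒯' with p⁻ ∈ {w(T), ℓ(T)} satisfies w(T) = p⁻. -/

import Mathlib

/-- A trade: opening price, winning price, losing price, size. -/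
structure Trade where
  op : ℤ
  win : ℤ
  lose : ℤ
  size : ℚ
  deriving DecidableEq

/-- A buy: `w(T) > o(T) > ℓ(T)` and `w(T) > 0 > ℓ(T)`. -/
def Trade.IsBuy (T : Trade) : Prop :=
  T.win > T.op ∧ T.op > T.lose ∧ T.win > 0 ∧ 0 > T.lose

/-- A sell: `w(T) < o(T) < ℓ(T)` and `w(T) < 0 < ℓ(T)`. -/
def Trade.IsSell (T : Trade) : Prop :=
  T.win < T.op ∧ T.op < T.lose ∧ T.win < 0 ∧ 0 < T.lose

/-- A valid trade has positive size and is either a buy or a sell. -/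
def Trade.Valid (T : Trade) : Prop := 0 < T.size ∧ (T.IsBuy ∨ T.IsSell)

/-- The sign of a trade: `1` for a buy, `-1` for a sell. -/
def Trade.sign (T : Trade) : ℤ := if T.op < T.win then 1 else -1

/-- A price path starting at `p`: a nonempty finite sequence of integer prices whose
first element is `p` and in which consecutive prices differ by exactly 1. -/
def IsPricePath (p : ℤ) (M : List ℤ) : Prop :=
  M ≠ [] ∧ M.head? = some p ∧ M.Chain' (fun a b => b = a + 1 ∨ b = a - 1)

/-- A price movement is a price path starting at `0`. -/
def IsPriceMovement (M : List ℤ) : Prop := IsPricePath 0 M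

/-- `w` is reached by `M`, and is reached before `l` is. -/
def ReachesFirst (w l : ℤ) (M : List ℤ) : Prop :=
  ∃ i : Fin M.length, M.get i = w ∧ ∀ j : Fin M.length, (j : ℕ) < (i : ℕ) → M.get j ≠ l

/-- `T` is won by `M`: the winning price is reached first. -/
def Trade.Wins (T : Trade) (M : List ℤ) : Prop := ReachesFirst T.win T.lose M

/-- `T` is lost by `M`: the losing price is reached first. -/
def Trade.Loses (T : Trade) (M : List ℤ) : Prop := ReachesFirst T.lose T.win M

/-- `M` closes `T`: it reaches at least one of the winning/losing prices. -/
def Trade.ClosedBy (T : Trade) (M : List ℤ) : Prop := T.win ∈ M ∨ T.lose ∈ M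

open Classical in
/-- The closing price of `T` under `M`: whichever of `w(T)`, `ℓ(T)` is reached first. -/
noncomputable def Trade.closePrice (T : Trade) (M : List ℤ) : ℤ :=
  if T.Wins M then T.win else T.lose

/-- The broker's profit from `T` under `M`: `σ(T)·(close(T,M) − o(T))·s(T)`. -/
noncomputable def Trade.profit (T : Trade) (M : List ℤ) : ℚ :=
  ((T.sign * (T.closePrice M - T.op) : ℤ) : ℚ) * T.size

/-- A set of trades is compatible if some price movement closes all of them
and wins all of them. -/
def Compatible (S : Set Trade) : Prop :=
  ∃ M : List ℤ, IsPriceMovement M ∧ (∀ T ∈ S, T.ClosedBy M) ∧ ∀ T ∈ S, T.Wins M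

/-- A price movement visits every price between `0` and any price it visits, no later than
that price. -/
theorem IsPriceMovement.exists_getElem_eq {M : List ℤ} (hM : IsPriceMovement M) (c : ℤ) :
    ∀ (i : ℕ) (hi : i < M.length), (M[i] ≤ c ∧ c ≤ 0 ∨ 0 ≤ c ∧ c ≤ M[i]) →
      ∃ (j : ℕ) (hj : j < M.length), j ≤ i ∧ M[j] = c := by
  obtain ⟨-, hhead, hchain⟩ := hM
  intro i
  induction i with
  | zero =>
    intro hi hc
    have h0 : M[0] = 0 := by
      rw [List.head?_eq_getElem?, List.getElem?_eq_getElem hi] at hhead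
      exact Option.some.inj hhead
    exact ⟨0, hi, le_rfl, by omega⟩
  | succ i ih =>
    intro hi hc
    have hstep : M[i + 1] = M[i] + 1 ∨ M[i + 1] = M[i] - 1 :=
      List.isChain_iff_getElem.mp hchain i hi
    by_cases hic : M[i + 1] = c
    · exact ⟨i + 1, hi, le_rfl, hic⟩
    · obtain ⟨j, hj, hji, hjc⟩ := ih (by omega) (by omega)
      exact ⟨j, hj, by omega, hjc⟩

/-- A sell losing at `a` and a buy losing at `b` are incompatible if the sell wins at or below
`b` and the buy wins at or above `a`, where `b < 0 < a`. -/
theorem not_compatible_of_win_beyond_lose {T₁ T₂ : Trade} (h₁ : 0 < T₁.lose) (h₂ : T₂.lose < 0)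
    (h₁₂ : T₁.win ≤ T₂.lose) (h₂₁ : T₁.lose ≤ T₂.win) : ¬ Compatible {T₁, T₂} := by
  rintro ⟨M, hM, -, hwin⟩
  obtain ⟨⟨i, hi⟩, hiw, hil⟩ := hwin T₁ (by simp)
  obtain ⟨⟨k, hk⟩, hkw, hkl⟩ := hwin T₂ (by simp)
  simp only [List.get_eq_getElem] at hiw hil hkw hkl
  rcases lt_trichotomy i k with hik | rfl | hki
  · obtain ⟨j, hj, hji, hjc⟩ := hM.exists_getElem_eq T₂.lose i hi (by omega)
    exact hkl ⟨j, hj⟩ (hji.trans_lt hik) hjc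
  · omega
  · obtain ⟨j, hj, hjk, hjc⟩ := hM.exists_getElem_eq T₁.lose k hk (by omega)
    exact hil ⟨j, hj⟩ (hjk.trans_lt hki) hjc

/-- Let `S` be a finite nonempty pairwise-compatible set of trades, `p⁺` the minimum
closing price of a trade of `S` above `0`, and `p⁻` the maximum closing price of a trade
of `S` below `0`.  Then either every trade of `S` having `p⁺` as one of its closing prices
wins at `p⁺`, or every trade of `S` having `p⁻` as one of its closing prices wins at `p⁻`. -/
theorem min_or_max_closing_price_all_winning (S : Set Trade) (hfin : S.Finite)
    (hne : S.Nonempty) (hval : ∀ T ∈ S, T.Valid)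
    (hpair : ∀ T₁ ∈ S, ∀ T₂ ∈ S, Compatible {T₁, T₂})
    (pplus pminus : ℤ)
    (hplus : IsLeast {q : ℤ | 0 < q ∧ ∃ T ∈ S, q = T.win ∨ q = T.lose} pplus)
    (hminus : IsGreatest {q : ℤ | q < 0 ∧ ∃ T ∈ S, q = T.win ∨ q = T.lose} pminus) :
    (∀ T ∈ S, (pplus = T.win ∨ pplus = T.lose) → T.win = pplus) ∨
    (∀ T ∈ S, (pminus = T.win ∨ pminus = T.lose) → T.win = pminus) := by
  by_contra! h
  obtain ⟨⟨T₁, hT₁, hp₁, hw₁⟩, T₂, hT₂, hp₂, hw₂⟩ := h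
  have hl₁ : pplus = T₁.lose := hp₁.resolve_left (Ne.symm hw₁)
  have hl₂ : pminus = T₂.lose := hp₂.resolve_left (Ne.symm hw₂)
  have hpos : 0 < pplus := hplus.1.1
  have hneg : pminus < 0 := hminus.1.1
  have hsell : T₁.win < 0 := by
    rcases (hval T₁ hT₁).2 with ⟨-, -, -, h⟩ | ⟨-, -, h, -⟩ <;> omega
  have hbuy : 0 < T₂.win := by
    rcases (hval T₂ hT₂).2 with ⟨-, -, h, -⟩ | ⟨-, -, -, h⟩ <;> omega
  have hle₁ : T₁.win ≤ pminus := hminus.2 ⟨hsell, T₁, hT₁, Or.inl rfl⟩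
  have hle₂ : pplus ≤ T₂.win := hplus.2 ⟨hbuy, T₂, hT₂, Or.inl rfl⟩
  exact not_compatible_of_win_beyond_lose (by omega) (by omega) (by omega) (by omega)
    (hpair T₁ hT₁ T₂ hT₂)
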